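/- In the difference field extension setting, there exists a quasi-polynomial Φ of degree at most m such that Φ(r) = trdeg_K L_r for all sufficiently large r ∈ ℕ. -/

import Mathlib

/-- The weighted order of `k ∈ ℕ^m`: `ord_w k = w₁k₁ + ⋯ + w_m k_m`. -/
def ordw {m : ℕ} (w : Fin m → ℕ) (k : Fin m → ℕ) : ℕ := ∑ i, w i * k i

/-- `τ^k = α₁^{k₁} ∘ ⋯ ∘ α_m^{k_m}` as a map `L → L`. -/
noncomputable def tauApp {L : Type*} [Field L] {m : ℕ}
    (α : Fin m → (L →+* L)) (k : Fin m → ℕ) : L → L :=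
  (List.ofFn fun i => (⇑(α i))^[k i]).foldr (· ∘ ·) id

/-- `L_r`: the subfield of `L` generated by `K` and all `τ^k η_i` with `ord_w k ≤ r`. -/
noncomputable def diffSubfield {L : Type*} [Field L] {m n : ℕ}
    (K : Subfield L) (α : Fin m → (L →+* L)) (w : Fin m → ℕ)
    (η : Fin n → L) (r : ℕ) : Subfield L :=
  Subfield.closure ((K : Set L) ∪
    {x | ∃ (k : Fin m → ℕ) (i : Fin n), ordw w k ≤ r ∧ x = tauApp α k (η i)})

/-- The transcendence degree over `K` of a subfield `S` of `L` containing `K`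
(as a natural number): the largest `d` such that `S` contains `d` elements
algebraically independent over `K`. -/
noncomputable def trdegNat {L : Type*} [Field L] (K S : Subfield L) : ℕ :=
  sSup {d : ℕ | ∃ b : Fin d → L, (∀ i, b i ∈ S) ∧ AlgebraicIndependent K b}


/-! ### Eventually quasi-polynomial sequences -/

/-- `(S^Q - 1)^d f = 0` eventually. -/
def EvQ (Q d : ℕ) (f : ℕ → ℚ) : Prop := ∃ N : ℕ, ∀ r, N ≤ r → (fwdDiff Q)^[d] f r = 0

lemma EvQ.succ_iff {Q d : ℕ} {f : ℕ → ℚ} :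
    EvQ Q (d + 1) f ↔ EvQ Q d (fun r => f (r + Q) - f r) := Iff.rfl

lemma EvQ.congr {Q d : ℕ} {f g : ℕ → ℚ} (h : EvQ Q d f) (N : ℕ) (hN : ∀ r, N ≤ r → f r = g r) :
    EvQ Q d g := by
  induction d generalizing f g with
  | zero =>
    obtain ⟨M, hM⟩ := h
    refine ⟨max M N, fun r hr => ?_⟩
    have := hM r (le_trans (le_max_left _ _) hr)
    simp only [Function.iterate_zero, id] at this ⊢
    rw [← hN r (le_trans (le_max_right _ _) hr), this]
  | succ d ih =>
    rw [EvQ.succ_iff] at h ⊢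
    refine ih h fun r hr => ?_
    rw [hN r hr, hN (r + Q) (by omega)]

lemma EvQ.add {Q d : ℕ} {f g : ℕ → ℚ} (hf : EvQ Q d f) (hg : EvQ Q d g) :
    EvQ Q d (fun r => f r + g r) := by
  obtain ⟨M, hM⟩ := hf
  obtain ⟨N, hN⟩ := hg
  refine ⟨max M N, fun r hr => ?_⟩
  have : (fun r => f r + g r) = f + g := rfl
  rw [this, fwdDiff_iter_add, Pi.add_apply, hM r (le_trans (le_max_left _ _) hr),
    hN r (le_trans (le_max_right _ _) hr), add_zero]

lemma EvQ.zero (Q d : ℕ) : EvQ Q d (fun _ => 0) := by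
  induction d with
  | zero => exact ⟨0, fun r _ => rfl⟩
  | succ d ih => rw [EvQ.succ_iff]; simpa using ih

lemma EvQ.sum {Q d : ℕ} {ι : Type*} (s : Finset ι) (f : ι → ℕ → ℚ) (h : ∀ i ∈ s, EvQ Q d (f i)) :
    EvQ Q d (fun r => ∑ i ∈ s, f i r) := by
  classical
  induction s using Finset.induction_on with
  | empty => simpa using EvQ.zero Q d
  | insert a s ha ih =>
    simp only [Finset.sum_insert ha]
    exact (h a (by simp)).add (ih fun i hi => h i (by simp [hi]))

lemma EvQ.shift_iff {Q d : ℕ} {f : ℕ → ℚ} (a : ℕ) :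
    EvQ Q d (fun r => f (r + a)) ↔ EvQ Q d f := by
  constructor
  · rintro ⟨N, hN⟩
    refine ⟨N + a, fun r hr => ?_⟩
    have := hN (r - a) (by omega)
    rw [fwdDiff_iter_comp_add] at this
    rwa [Nat.sub_add_cancel (by omega)] at this
  · rintro ⟨N, hN⟩
    refine ⟨N, fun r hr => ?_⟩
    rw [fwdDiff_iter_comp_add]
    exact hN _ (by omega)

lemma EvQ.of_diff {Q d w : ℕ} (hw : w ∣ Q) {f : ℕ → ℚ} (h : EvQ Q d (fun r => f (r + w) - f r)) :
    EvQ Q (d + 1) f := by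
  obtain ⟨c, rfl⟩ := hw
  rw [EvQ.succ_iff]
  have key : ∀ r, f (r + w * c) - f r =
      ∑ i ∈ Finset.range c, (f (r + w * i + w) - f (r + w * i)) := by
    intro r
    have := Finset.sum_range_sub (fun i => f (r + w * i)) c
    simp only [Nat.mul_succ, ← add_assoc, mul_zero, add_zero] at this
    exact this.symm
  simp only [key]
  refine EvQ.sum _ _ fun i _ => ?_
  exact (EvQ.shift_iff (f := fun r => f (r + w) - f r) (w * i)).2 h

lemma EvQ.up {Q d : ℕ} {f : ℕ → ℚ} (h : EvQ Q d f) : EvQ Q (d + 1) f := by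
  obtain ⟨N, hN⟩ := h
  refine ⟨N, fun r hr => ?_⟩
  rw [Function.iterate_succ_apply', fwdDiff, hN _ (by omega), hN _ hr, sub_zero]

lemma EvQ.up' {Q d e : ℕ} (hde : d ≤ e) {f : ℕ → ℚ} (h : EvQ Q d f) : EvQ Q e f := by
  induction e, hde using Nat.le_induction with
  | base => exact h
  | succ e _ ih => exact ih.up

/-- The binomial coefficient polynomial. -/
noncomputable def binomPoly (k : ℕ) : Polynomial ℚ :=
  Polynomial.C ((k.factorial : ℚ)⁻¹) * descPochhammer ℚ k

lemma binomPoly_eval (k t : ℕ) : (binomPoly k).eval (t : ℚ) = (t.choose k : ℚ) := by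
  have hk : (k.factorial : ℚ) ≠ 0 := by exact_mod_cast k.factorial_ne_zero
  rw [binomPoly, Polynomial.eval_mul, Polynomial.eval_C, descPochhammer_eval_eq_descFactorial,
    Nat.descFactorial_eq_factorial_mul_choose]
  push_cast
  field_simp

lemma binomPoly_natDegree (k : ℕ) : (binomPoly k).natDegree ≤ k := by
  refine (Polynomial.natDegree_C_mul_le _ _).trans ?_
  rw [descPochhammer_natDegree]

lemma EvQ.quasi {Q m : ℕ} (hQ : 0 < Q) {f : ℕ → ℚ} (h : EvQ Q (m + 1) f) :
    ∃ g : Fin Q → Polynomial ℚ, (∀ i, (g i).natDegree ≤ m) ∧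
      ∃ N : ℕ, ∀ r : ℕ, N ≤ r → f r = (g ⟨r % Q, Nat.mod_lt r hQ⟩).eval (r : ℚ) := by
  obtain ⟨N, hN⟩ := h
  have hv : ∀ k, m + 1 ≤ k → ∀ r, N ≤ r → (fwdDiff Q)^[k] f r = 0 := by
    intro k hk
    induction k, hk using Nat.le_induction with
    | base => exact hN
    | succ k _ ih =>
      intro r hr
      rw [Function.iterate_succ_apply', fwdDiff, ih _ (by omega), ih _ hr, sub_zero]
  let lin : ℕ → Polynomial ℚ := fun i =>
    Polynomial.C ((Q : ℚ)⁻¹) * Polynomial.X + Polynomial.C (-((Q : ℚ)⁻¹ * ((Q * N + i : ℕ) : ℚ)))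
  refine ⟨fun i => ∑ k ∈ Finset.range (m + 1),
    Polynomial.C ((fwdDiff Q)^[k] f (Q * N + i)) * (binomPoly k).comp (lin i), ?_, Q * N, ?_⟩
  · intro i
    refine Polynomial.natDegree_sum_le_of_forall_le _ _ fun k hk => ?_
    refine (Polynomial.natDegree_C_mul_le _ _).trans ?_
    rw [Polynomial.natDegree_comp]
    have h1 : (lin i).natDegree ≤ 1 := Polynomial.natDegree_linear_le
    have h2 := binomPoly_natDegree k
    have h3 := Finset.mem_range.1 hk
    nlinarith
  · intro r hr
    set t := r / Q - N with ht
    have hQN : N ≤ r / Q := (Nat.le_div_iff_mul_le hQ).2 (by rwa [mul_comm])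
    have hr' : r = (Q * N + r % Q) + t * Q := by
      have h1 := Nat.mod_add_div r Q
      have h2 : r / Q = N + t := by omega
      rw [h2] at h1
      linarith [h1, mul_add Q N t, mul_comm Q t]
    have hQ0 : (Q : ℚ) ≠ 0 := by positivity
    have hNy : N ≤ Q * N + r % Q := (Nat.le_mul_of_pos_left N hQ).trans (Nat.le_add_right _ _)
    have hlin : (lin (r % Q)).eval (r : ℚ) = (t : ℚ) := by
      have : (r : ℚ) = ((Q * N + r % Q : ℕ) : ℚ) + t * Q := by exact_mod_cast hr'
      simp only [lin, Polynomial.eval_add, Polynomial.eval_mul, Polynomial.eval_C,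
        Polynomial.eval_X]
      rw [this]
      field_simp
      ring
    simp only [Polynomial.eval_finsetSum, Polynomial.eval_mul, Polynomial.eval_C,
      Polynomial.eval_comp, hlin, binomPoly_eval]
    have hs := shift_eq_sum_fwdDiff_iter Q f t (Q * N + r % Q)
    rw [smul_eq_mul, ← hr'] at hs
    rw [hs]
    have e1 : ∀ s, (s = t ∨ s = m) → ∑ k ∈ Finset.range (s + 1), t.choose k • (fwdDiff Q)^[k] f (Q * N + r % Q)
        = ∑ k ∈ Finset.range (t + m + 1), t.choose k • (fwdDiff Q)^[k] f (Q * N + r % Q) := by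
      intro s hs
      refine Finset.sum_subset (fun x hx => ?_) fun x hx hx' => ?_
      · simp only [Finset.mem_range] at *; omega
      · simp only [Finset.mem_range] at *
        rcases hs with rfl | rfl
        · rw [Nat.choose_eq_zero_of_lt (by omega), zero_smul]
        · rw [hv x (by omega) _ hNy, smul_zero]
    rw [e1 t (Or.inl rfl), ← e1 m (Or.inr rfl)]
    refine Finset.sum_congr rfl fun k _ => ?_
    rw [nsmul_eq_mul, mul_comm]

/-! ### Counting points of lower sets in `ℕ^m` -/

lemma ordw_succ {m : ℕ} (w : Fin (m + 1) → ℕ) (k : Fin (m + 1) → ℕ) :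
    ordw w k = w 0 * k 0 + ordw (Fin.tail w) (Fin.tail k) := by
  simp [ordw, Fin.sum_univ_succ, Fin.tail]

lemma ordw_finite {m : ℕ} {w : Fin m → ℕ} (hw : ∀ i, 0 < w i) (r : ℕ) :
    {k : Fin m → ℕ | ordw w k ≤ r}.Finite := by
  refine (Set.finite_Iic (fun _ : Fin m => r)).subset fun k hk i => ?_
  have h1 : w i * k i ≤ ordw w k :=
    Finset.single_le_sum (f := fun i => w i * k i) (fun _ _ => Nat.zero_le _) (Finset.mem_univ i)
  have h2 : k i ≤ w i * k i := Nat.le_mul_of_pos_left _ (hw i)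
  exact h2.trans (h1.trans hk)

/-- Number of points of `D` of weighted order at most `r`. -/
noncomputable def cnt {m : ℕ} (w : Fin m → ℕ) (D : Set (Fin m → ℕ)) (r : ℕ) : ℕ :=
  {k | k ∈ D ∧ ordw w k ≤ r}.ncard

/-- Shift in the first coordinate. -/
def up0 {m : ℕ} (k : Fin (m + 1) → ℕ) : Fin (m + 1) → ℕ := Fin.cons (k 0 + 1) (Fin.tail k)

lemma up0_inj {m : ℕ} : Function.Injective (up0 (m := m)) := by
  intro a b h
  have h0 := congrFun h 0
  have ht := congrArg Fin.tail h
  simp only [up0, Fin.cons_zero, Fin.tail_cons, add_left_inj] at h0 ht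
  rw [← Fin.cons_self_tail a, ← Fin.cons_self_tail b, h0, ht]

/-- Embedding as the points with first coordinate zero. -/
def cons0 {m : ℕ} (k : Fin m → ℕ) : Fin (m + 1) → ℕ := Fin.cons 0 k

lemma cons0_inj {m : ℕ} : Function.Injective (cons0 (m := m)) := by
  intro a b h
  have ht := congrArg Fin.tail h
  simpa only [cons0, Fin.tail_cons] using ht

lemma cnt_rec {m : ℕ} {w : Fin (m + 1) → ℕ} (hw : ∀ i, 0 < w i) (D : Set (Fin (m + 1) → ℕ))
    (r : ℕ) : cnt w D (r + w 0) =
      cnt w (up0 ⁻¹' D) r + cnt (Fin.tail w) (cons0 ⁻¹' D) (r + w 0) := by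
  have hset : {k | k ∈ D ∧ ordw w k ≤ r + w 0} =
      up0 '' {k | k ∈ up0 ⁻¹' D ∧ ordw w k ≤ r} ∪
      cons0 ''
        {k | k ∈ (cons0 ⁻¹' D) ∧ ordw (Fin.tail w) k ≤ r + w 0} := by
    ext k
    constructor
    · rintro ⟨hk, ho⟩
      rcases Nat.eq_zero_or_pos (k 0) with h0 | h0
      · right
        have e : cons0 (Fin.tail k) = k := by
          rw [cons0]; rw [← h0, Fin.cons_self_tail]
        refine ⟨Fin.tail k, ⟨?_, ?_⟩, e⟩
        · rw [Set.mem_preimage, e]; exact hk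
        · rw [ordw_succ] at ho; omega
      · left
        have e : up0 (Fin.cons (k 0 - 1) (Fin.tail k) : Fin (m + 1) → ℕ) = k := by
          simp only [up0, Fin.cons_zero, Fin.tail_cons]
          rw [Nat.sub_add_cancel h0, Fin.cons_self_tail]
        refine ⟨_, ⟨?_, ?_⟩, e⟩
        · rw [Set.mem_preimage, e]; exact hk
        · rw [ordw_succ] at ho ⊢
          simp only [Fin.cons_zero, Fin.tail_cons]
          obtain ⟨c, hc⟩ : ∃ c, k 0 = c + 1 := ⟨k 0 - 1, by omega⟩
          rw [hc] at ho ⊢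
          simp only [add_tsub_cancel_right]
          rw [mul_add] at ho; omega
    · rintro (⟨k, ⟨hk, ho⟩, rfl⟩ | ⟨k, ⟨hk, ho⟩, rfl⟩)
      · refine ⟨hk, ?_⟩
        rw [ordw_succ] at ho ⊢
        simp only [up0, Fin.cons_zero, Fin.tail_cons]
        rw [mul_add]; omega
      · refine ⟨hk, ?_⟩
        rw [ordw_succ]
        simpa [cons0] using ho
  have hf1 : {k | k ∈ up0 ⁻¹' D ∧ ordw w k ≤ r}.Finite :=
    (ordw_finite hw r).subset fun k hk => hk.2
  have hf2 : {k | k ∈ (cons0 ⁻¹' D) ∧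
      ordw (Fin.tail w) k ≤ r + w 0}.Finite :=
    (ordw_finite (w := Fin.tail w) (fun i => hw _) (r + w 0)).subset fun k hk => hk.2
  unfold cnt
  rw [hset, Set.ncard_union_eq ?_ (hf1.image _) (hf2.image _),
    Set.ncard_image_of_injective _ up0_inj,
    Set.ncard_image_of_injective _ cons0_inj]
  rw [Set.disjoint_left]
  rintro _ ⟨k, _, rfl⟩ ⟨k', _, h⟩
  have := congrFun h 0
  simp [up0, cons0] at this

lemma le_up0 {m : ℕ} (k : Fin (m + 1) → ℕ) : k ≤ up0 k := by
  intro i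
  refine Fin.cases ?_ (fun j => ?_) i
  · simp [up0]
  · simp [up0, Fin.tail]

lemma up0_mono {m : ℕ} : Monotone (up0 (m := m)) := by
  intro a b h i
  refine Fin.cases ?_ (fun j => ?_) i
  · simpa [up0] using h 0
  · simpa [up0, Fin.tail] using h j.succ

lemma up0_iter {m : ℕ} (c : ℕ) (k : Fin (m + 1) → ℕ) :
    up0^[c] k = Fin.cons (k 0 + c) (Fin.tail k) := by
  induction c with
  | zero => simp
  | succ c ih => rw [Function.iterate_succ_apply', ih]; simp [up0, add_assoc]

lemma exists_stable {m : ℕ} {D : Set (Fin (m + 1) → ℕ)} (hD : IsLowerSet D) :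
    ∃ c : ℕ, ∀ k, up0^[c] k ∈ D → up0^[c + 1] k ∈ D := by
  have hfin : {x | Minimal (· ∈ Dᶜ) x}.Finite :=
    WellQuasiOrderedLE.finite_of_isAntichain (setOfPred_minimal_antichain _)
  obtain ⟨c, hc⟩ := (hfin.image fun k => k 0).bddAbove
  refine ⟨c, fun k hk => ?_⟩
  by_contra hn
  obtain ⟨x, hx, hmin⟩ := exists_minimal_le_of_wellFoundedLT (· ∈ Dᶜ) _ hn
  have hxc : x 0 ≤ c := hc ⟨x, hmin, rfl⟩
  refine hmin.1 (hD ?_ hk)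
  intro i
  have := hx i
  rw [up0_iter] at this ⊢
  revert this
  refine Fin.cases ?_ (fun j => ?_) i
  · intro _
    simp only [Fin.cons_zero]
    omega
  · simp

lemma cnt_evq (m : ℕ) (w : Fin m → ℕ) (hw : ∀ i, 0 < w i) (Q : ℕ) (hQ : ∀ i, w i ∣ Q)
    (D : Set (Fin m → ℕ)) (hD : IsLowerSet D) : EvQ Q (m + 1) (fun r => (cnt w D r : ℚ)) := by
  induction m with
  | zero =>
    rw [EvQ.succ_iff]
    have : ∀ r, cnt w D r = cnt w D 0 := by intro r; simp [cnt, ordw]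
    refine ⟨0, fun r _ => ?_⟩
    simp [this (r + Q), this r]
  | succ m ih =>
    have hslice : ∀ D : Set (Fin (m + 1) → ℕ), IsLowerSet D →
        EvQ Q (m + 1) (fun r => (cnt (Fin.tail w) (cons0 ⁻¹' D) r : ℚ)) := by
      intro D hD
      refine ih (Fin.tail w) (fun i => hw _) (fun i => hQ _) _ fun a b hab ha => hD ?_ ha
      intro i
      refine Fin.cases ?_ (fun j => ?_) i
      · simp [cons0]
      · simpa [cons0] using hab j
    have hlow : ∀ D : Set (Fin (m + 1) → ℕ), IsLowerSet D → IsLowerSet (up0 ⁻¹' D) :=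
      fun D hD a b hab ha => hD (up0_mono hab) ha
    -- induct on the stabilisation index
    obtain ⟨c, hc⟩ := exists_stable hD
    induction c generalizing D with
    | zero =>
      have hT : up0 ⁻¹' D = D := by
        ext k
        exact ⟨fun h => hD (le_up0 k) h, fun h => hc k h⟩
      refine EvQ.of_diff (hQ 0) ?_
      refine EvQ.congr ((EvQ.shift_iff (w 0)).2 (hslice D hD)) 0 fun r _ => ?_
      have := cnt_rec hw D r
      rw [hT] at this
      rw [this]
      push_cast
      ring
    | succ c ihc =>
      have h1 := ihc (up0 ⁻¹' D) (hlow D hD) (by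
        intro k hk
        simp only [Set.mem_preimage, ← Function.iterate_succ_apply' up0] at hk ⊢
        exact hc k hk)
      refine (EvQ.shift_iff (w 0)).1 ?_
      refine EvQ.congr (h1.add ((EvQ.shift_iff (w 0)).2 (hslice D hD)).up) 0 fun r _ => ?_
      rw [cnt_rec hw D r]
      push_cast
      ring

/-! ### Algebraic part -/

section Alg

variable {L : Type*} [Field L]

lemma mem_closure_map (K : Subfield L) (σ : L →+* L) (hσ : ∀ x ∈ K, σ x ∈ K) {X : Set L} {x : L}
    (hx : x ∈ (AlgebraicIndependent.matroid K L).closure X) :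
    σ x ∈ (AlgebraicIndependent.matroid K L).closure (σ '' X) := by
  rw [AlgebraicIndependent.matroid_closure_eq] at hx ⊢
  rw [SetLike.mem_coe, Subalgebra.mem_algebraicClosure] at hx ⊢
  have hmap : ∀ y ∈ Algebra.adjoin K X, σ y ∈ Algebra.adjoin K (σ '' X) := by
    intro y hy
    induction hy using Algebra.adjoin_induction with
    | mem z hz => exact Algebra.subset_adjoin ⟨z, hz, rfl⟩
    | algebraMap z =>
      exact (Algebra.adjoin K (σ '' X)).algebraMap_mem (⟨σ z, hσ z z.2⟩ : K)
    | add a b _ _ ha hb => rw [map_add]; exact add_mem ha hb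
    | mul a b _ _ ha hb => rw [map_mul]; exact mul_mem ha hb
  let f : Algebra.adjoin K X →+* Algebra.adjoin K (σ '' X) :=
    σ.restrict (Algebra.adjoin K X) (Algebra.adjoin K (σ '' X)) hmap
  refine IsAlgebraic.ringHom_of_comp_eq f σ hx ?_ ?_
  · intro a b hab
    have : σ a = σ b := congrArg Subtype.val hab
    exact Subtype.ext (σ.injective this)
  · ext y; rfl

lemma trdegNat_eq (K : Subfield L) (G : Set L) (d : ℕ)
    (hd : (AlgebraicIndependent.matroid K L).eRk G = d) :
    trdegNat K (Subfield.closure ((K : Set L) ∪ G)) = d := by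
  set M := AlgebraicIndependent.matroid K L with hM
  set S := Subfield.closure ((K : Set L) ∪ G) with hS
  have hGS : G ⊆ S := fun x hx => Subfield.subset_closure (Or.inr hx)
  have hSc : (S : Set L) ⊆ M.closure G := by
    intro x hx
    rw [hM, AlgebraicIndependent.matroid_closure_eq]
    induction hx using Subfield.closure_induction with
    | mem z hz =>
      rcases hz with hz | hz
      · exact Subalgebra.algebraMap_mem (Subalgebra.algebraicClosure (Algebra.adjoin K G) L)
          (algebraMap K (Algebra.adjoin K G) ⟨z, hz⟩)
      · exact Subalgebra.algebraMap_mem (Subalgebra.algebraicClosure (Algebra.adjoin K G) L)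
          (⟨z, Algebra.subset_adjoin hz⟩ : Algebra.adjoin K G)
    | one => exact one_mem _
    | add a b _ _ ha hb => exact add_mem ha hb
    | neg a _ ha => exact neg_mem ha
    | inv a _ ha => exact IsAlgebraic.inv ha
    | mul a b _ _ ha hb => exact mul_mem ha hb
  have hrk : M.eRk S = d := by
    refine le_antisymm ?_ (hd ▸ M.eRk_mono hGS)
    rw [← hd, ← M.eRk_closure_eq G]
    exact M.eRk_mono hSc
  refine IsGreatest.csSup_eq ⟨?_, ?_⟩
  · obtain ⟨I, hI, hind, hcard⟩ := Matroid.le_eRk_iff.1 hrk.ge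
    have hfin : I.Finite := Set.finite_of_encard_eq_coe hcard
    have := hfin.fintype
    have hc : Fintype.card I = d := by
      rw [Set.encard_eq_coe_toFinset_card, Set.toFinset_card] at hcard
      exact_mod_cast hcard
    let e : Fin d ≃ I := (Fintype.equivFinOfCardEq hc).symm
    refine ⟨fun i => (e i : L), fun i => hI (e i).2, ?_⟩
    have h1 : AlgebraicIndependent K ((↑) : I → L) := AlgebraicIndependent.matroid_indep_iff.1 hind
    exact h1.comp e e.injective
  · rintro d' ⟨b, hb, hind⟩
    have h1 : M.Indep (Set.range b) := AlgebraicIndependent.matroid_indep_iff.2 hind.to_subtype_range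
    have h2 := h1.encard_le_eRk_of_subset (X := S) (by rintro _ ⟨i, rfl⟩; exact hb i)
    rw [hrk, ← Set.image_univ, hind.injective.encard_image, Set.encard_univ] at h2
    simpa using h2

open Classical in
lemma eRk_image_eq {E ι κ : Type*} [LinearOrder κ] (M : Matroid E) (hE : M.E = Set.univ)
    (x : ι → E) (key : ι → κ) (hkey : Function.Injective key) (s : Finset ι) :
    M.eRk (x '' s) =
      ((s.filter fun i => x i ∉ M.closure (x '' {j | j ∈ s ∧ key j < key i})).card : ℕ∞) := by
  induction s using Finset.induction_on_max_value key with
  | empty => simp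
  | insert a s ha hmax ih =>
    have hlt : ∀ i ∈ s, key i < key a := fun i hi =>
      lt_of_le_of_ne (hmax i hi) fun h => ha (hkey h ▸ hi)
    have e1 : {j | j ∈ insert a s ∧ key j < key a} = (s : Set ι) := by
      ext j
      simp only [Finset.mem_insert, Set.mem_ofPred_eq, Finset.mem_coe]
      constructor
      · rintro ⟨rfl | h, h'⟩
        · exact absurd h' (lt_irrefl _)
        · exact h
      · exact fun h => ⟨Or.inr h, hlt j h⟩
    have e2 : ∀ i ∈ s, {j | j ∈ insert a s ∧ key j < key i} = {j | j ∈ s ∧ key j < key i} := by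
      intro i hi
      ext j
      simp only [Finset.mem_insert, Set.mem_ofPred_eq]
      constructor
      · rintro ⟨rfl | h, h'⟩
        · exact absurd h' (not_lt.2 (hmax i hi))
        · exact ⟨h, h'⟩
      · exact fun h => ⟨Or.inr h.1, h.2⟩
    have e3 : (s.filter fun i => x i ∉ M.closure (x '' {j | j ∈ insert a s ∧ key j < key i})) =
        s.filter fun i => x i ∉ M.closure (x '' {j | j ∈ s ∧ key j < key i}) :=
      Finset.filter_congr fun i hi => by rw [e2 i hi]
    rw [Finset.filter_insert, e1, e3, Finset.coe_insert, Set.image_insert_eq]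
    by_cases h : x a ∈ M.closure (x '' (s : Set ι))
    · rw [if_neg (not_not.2 h)]
      rw [← ih, ← M.eRk_closure_eq (insert _ _), Matroid.closure_insert_eq_of_mem_closure h,
        M.eRk_closure_eq]
    · rw [if_pos h]
      rw [Matroid.eRk_insert_eq_add_one ⟨by rw [hE]; trivial, h⟩, ih, Finset.card_insert_of_notMem]
      · push_cast; rfl
      · simp [ha]

lemma tauApp_succ {m : ℕ} (α : Fin (m + 1) → (L →+* L)) (k : Fin (m + 1) → ℕ) (x : L) :
    tauApp α k x = (α 0)^[k 0] (tauApp (Fin.tail α) (Fin.tail k) x) := by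
  simp [tauApp, List.ofFn_succ, Fin.tail]

lemma comm_tauApp {m : ℕ} (α : Fin m → (L →+* L)) (σ : L →+* L)
    (h : ∀ i x, σ (α i x) = α i (σ x)) (k : Fin m → ℕ) (x : L) :
    σ (tauApp α k x) = tauApp α k (σ x) := by
  induction m with
  | zero => simp [tauApp]
  | succ m ih =>
    rw [tauApp_succ, tauApp_succ, ← ih (Fin.tail α) (fun i => h _)]
    have hc : Function.Commute σ (α 0) := fun x => h 0 x
    exact (hc.iterate_right (k 0)) _

lemma tauApp_single {m : ℕ} (α : Fin m → (L →+* L))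
    (h : ∀ i j x, α i (α j x) = α j (α i x)) (k : Fin m → ℕ) (i : Fin m) (x : L) :
    α i (tauApp α k x) = tauApp α (k + Pi.single i 1) x := by
  induction m with
  | zero => exact i.elim0
  | succ m ih =>
    rw [tauApp_succ, tauApp_succ]
    revert i
    refine Fin.cases ?_ fun j => ?_
    · have : Fin.tail (k + Pi.single 0 1) = Fin.tail k := by
        ext j; simp [Fin.tail]
      rw [this]
      simp only [Pi.add_apply, Pi.single_eq_same]
      rw [Function.iterate_succ_apply']
    · have h1 : Fin.tail (k + Pi.single j.succ 1) = Fin.tail k + Pi.single j 1 := by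
        ext l; simp [Fin.tail, Pi.single_apply]
      have h2 : (k + Pi.single j.succ 1 : Fin (m + 1) → ℕ) 0 = k 0 := by simp
      rw [h1, h2, ← ih (Fin.tail α) (fun i j => h _ _) (Fin.tail k) j]
      have hc : Function.Commute (α j.succ) (α 0) := fun x => h _ 0 x
      exact (hc.iterate_right (k 0)) _

end Alg

/-! ### The ranking -/

/-- The ranking key on terms. -/
def rkey {m n : ℕ} (w : Fin m → ℕ) (u : (Fin m → ℕ) × Fin n) :
    ℕ ×ₗ (Lex (Fin m → ℕ) ×ₗ Fin n) :=
  toLex (ordw w u.1, toLex (toLex u.1, u.2))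

lemma rkey_inj {m n : ℕ} (w : Fin m → ℕ) : Function.Injective (rkey (n := n) w) := by
  rintro ⟨k, i⟩ ⟨k', i'⟩ h
  simp only [rkey, EmbeddingLike.apply_eq_iff_eq, Prod.mk.injEq] at h
  ext1
  · exact h.2.1
  · exact h.2.2

lemma ordw_add {m : ℕ} (w : Fin m → ℕ) (k d : Fin m → ℕ) :
    ordw w (k + d) = ordw w k + ordw w d := by
  simp [ordw, mul_add, Finset.sum_add_distrib]

lemma rkey_lt_add {m n : ℕ} (w : Fin m → ℕ) (u v : (Fin m → ℕ) × Fin n) (d : Fin m → ℕ)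
    (h : rkey w u < rkey w v) : rkey w (u.1 + d, u.2) < rkey w (v.1 + d, v.2) := by
  simp only [rkey, Prod.Lex.toLex_lt_toLex, ordw_add] at h ⊢
  rcases h with h | ⟨h1, h2 | ⟨h2, h3⟩⟩
  · left; omega
  · right
    refine ⟨by omega, Or.inl ?_⟩
    rw [toLex_add, toLex_add]
    exact add_lt_add_left h2 _
  · right
    refine ⟨by omega, Or.inr ⟨?_, h3⟩⟩
    rw [toLex_add, toLex_add, h2]

lemma upper_of_single {m : ℕ} {U : Set (Fin m → ℕ)} (h : ∀ k ∈ U, ∀ i, k + Pi.single i 1 ∈ U) :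
    IsUpperSet U := by
  have key : ∀ N : ℕ, ∀ k k' : Fin m → ℕ, k ≤ k' → k ∈ U → ∑ i, (k' i - k i) = N → k' ∈ U := by
    intro N
    induction N with
    | zero =>
      intro k k' hkk hk hs
      have : k = k' := by
        ext i
        have h1 : k' i - k i = 0 := (Finset.sum_eq_zero_iff.1 hs) i (Finset.mem_univ i)
        have h2 : k i ≤ k' i := hkk i
        omega
      exact this ▸ hk
    | succ N ih =>
      intro k k' hkk hk hs
      obtain ⟨i, -, hi⟩ : ∃ i ∈ Finset.univ, k' i - k i ≠ 0 :=
        Finset.exists_ne_zero_of_sum_ne_zero (by omega)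
      refine ih (k + Pi.single i 1) k' ?_ (h k hk i) ?_
      · intro j
        by_cases hj : j = i
        · subst hj; simp; omega
        · simpa [hj] using hkk j
      · rw [← Finset.add_sum_erase _ _ (Finset.mem_univ i)] at hs ⊢
        have : ∑ j ∈ Finset.univ.erase i, (k' j - (k + Pi.single i 1 : Fin m → ℕ) j) =
            ∑ j ∈ Finset.univ.erase i, (k' j - k j) :=
          Finset.sum_congr rfl fun j hj => by simp [Finset.ne_of_mem_erase hj]
        rw [this]
        simp only [Pi.add_apply, Pi.single_eq_same]
        omega
  exact fun k k' hkk hk => key _ k k' hkk hk rfl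

/-- Existence of the difference dimension quasi-polynomial: in the difference field
extension setting there is a quasi-polynomial `Φ` of degree at most `m` with
`Φ(r) = trdeg_K L_r` for all sufficiently large `r`. -/
theorem exists_difference_dimension_quasipolynomial
    {L : Type*} [Field L] [CharZero L] (K : Subfield L)
    (m n : ℕ) (hm : 0 < m) (α : Fin m → (L →+* L))
    (hcomm : ∀ i j, (α i).comp (α j) = (α j).comp (α i))
    (hinj : ∀ i, Function.Injective (α i))
    (hK : ∀ i, ∀ x ∈ K, α i x ∈ K)
    (w : Fin m → ℕ) (hw : ∀ i, 0 < w i)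
    (η : Fin n → L)
    (hgen : Subfield.closure ((K : Set L) ∪
      {x | ∃ (k : Fin m → ℕ) (i : Fin n), x = tauApp α k (η i)}) = ⊤) :
    ∃ (q : ℕ) (hq : 0 < q) (g : Fin q → Polynomial ℚ),
      (∀ i : Fin q, (g i).natDegree ≤ m) ∧
      ∃ N : ℕ, ∀ r : ℕ, N ≤ r →
        (trdegNat K (diffSubfield K α w η r) : ℚ)
          = (g ⟨r % q, Nat.mod_lt r hq⟩).eval (r : ℚ) := by
    classical
  have hcomm' : ∀ i j x, α i (α j x) = α j (α i x) := fun i j x =>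
    congrArg (fun f : L →+* L => f x) (hcomm i j)
  set M := AlgebraicIndependent.matroid K L with hM
  let x : (Fin m → ℕ) × Fin n → L := fun u => tauApp α u.1 (η u.2)
  -- the set of dependent terms
  let Dep : (Fin m → ℕ) × Fin n → Prop := fun u => x u ∈ M.closure (x '' {v | rkey w v < rkey w u})
  have hup : ∀ i : Fin n, IsUpperSet {k | Dep (k, i)} := by
    intro i
    refine upper_of_single fun k hk j => ?_
    have h1 := mem_closure_map K (α j) (hK j) hk
    have h2 : α j (x (k, i)) = x (k + Pi.single j 1, i) := tauApp_single α hcomm' k j (η i)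
    rw [h2] at h1
    refine M.closure_subset_closure ?_ h1
    rintro _ ⟨_, ⟨v, hv, rfl⟩, rfl⟩
    exact ⟨(v.1 + Pi.single j 1, v.2), rkey_lt_add w v (k, i) _ hv,
      (tauApp_single α hcomm' v.1 j (η v.2)).symm⟩
  have hcount : ∀ r, trdegNat K (diffSubfield K α w η r) =
      ∑ i : Fin n, cnt w {k | ¬ Dep (k, i)} r := by
    intro r
    let s : Finset ((Fin m → ℕ) × Fin n) := (ordw_finite hw r).toFinset ×ˢ Finset.univ
    have hs : ∀ u, u ∈ s ↔ ordw w u.1 ≤ r := by intro u; simp [s]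
    have hG : {y | ∃ (k : Fin m → ℕ) (i : Fin n), ordw w k ≤ r ∧ y = tauApp α k (η i)} =
        x '' s := by
      ext y
      constructor
      · rintro ⟨k, i, h, rfl⟩
        exact ⟨(k, i), (hs _).2 h, rfl⟩
      · rintro ⟨⟨k, i⟩, h, rfl⟩
        exact ⟨k, i, (hs _).1 h, rfl⟩
    unfold diffSubfield
    rw [hG]
    refine trdegNat_eq K _ _ ?_
    rw [eRk_image_eq (AlgebraicIndependent.matroid K L) rfl x (rkey w) (rkey_inj w) s]
    congr 1
    have hfil : (s.filter fun u => x u ∉ M.closure (x '' {v | v ∈ s ∧ rkey w v < rkey w u})) =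
        s.filter fun u => ¬ Dep u := by
      refine Finset.filter_congr fun u hu => ?_
      have : {v | v ∈ s ∧ rkey w v < rkey w u} = {v | rkey w v < rkey w u} := by
        ext v
        refine ⟨fun h => h.2, fun h => ⟨?_, h⟩⟩
        rw [hs] at hu ⊢
        have h' : rkey w v < rkey w u := h
        simp only [rkey, Prod.Lex.toLex_lt_toLex] at h'
        rcases h' with h' | h'
        · omega
        · omega
      rw [this]
    rw [hfil, Finset.card_eq_sum_card_fiberwise (f := Prod.snd) (t := Finset.univ) (by simp)]
    refine Finset.sum_congr rfl fun i _ => ?_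
    unfold cnt
    rw [← Set.ncard_coe_finset]
    refine (Set.ncard_image_of_injective (f := fun k : Fin m → ℕ => (k, i)) _
      (fun a b h => congrArg Prod.fst h)).symm.trans ?_ |>.symm
    congr 1
    ext ⟨k, j⟩
    simp only [Set.mem_image, Set.mem_ofPred_eq, Prod.mk.injEq, Finset.coe_filter, Finset.mem_filter,
      hs]
    constructor
    · rintro ⟨k, ⟨h1, h2⟩, rfl, rfl⟩
      exact ⟨⟨h2, h1⟩, rfl⟩
    · rintro ⟨⟨h1, h2⟩, rfl⟩
      exact ⟨k, ⟨h2, h1⟩, rfl, rfl⟩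
  let Q := ∏ i, w i
  have hQ : 0 < Q := Finset.prod_pos fun i _ => hw i
  have hev : EvQ Q (m + 1) (fun r => (trdegNat K (diffSubfield K α w η r) : ℚ)) := by
    simp only [hcount, Nat.cast_sum]
    refine EvQ.sum _ _ fun i _ => ?_
    exact cnt_evq m w hw Q (fun i => Finset.dvd_prod_of_mem w (Finset.mem_univ i)) _
      (hup i).compl
  obtain ⟨g, hg, N, hN⟩ := hev.quasi hQ
  exact ⟨Q, hQ, g, hg, N, hN⟩
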